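/- arXiv:1605.02582 — 2 statements merged into one kernel-verified Lean document; each statement's English description precedes it below -/
import Mathlib

section
/- Let P, C, D be points of the Euclidean plane with ⟪D - P, C - P⟫ < 0, let A := 2 • P - C (the reflection of C in P), and let B := P + (2 * ⟪D - P, C - P⟫ / ‖D - P‖²) • (D - P) (the second intersection of line PD with the circle of center C through P). Then dist(A, D) = dist(A, P) if and only if P is the midpoint of B and D (equivalently, dist(B, P) = dist(P, D) with B, P, D collinear and P between B and D). -/
open RealInnerProductSpace

/-!
The point reflection in `P` exchanges `A` with `C`, and fixes `P`. Hence `dist A D = dist A P` says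
exactly that the reflection of `D` in `P` lies on the circle of center `C` through `P`. As this
reflection also lies on the line `PD` and differs from `P` unless `D = P`, it lies on the circle
exactly when it is the second intersection `B`, that is, when `P` is the midpoint of `B` and `D`.
-/

section PointReflection

variable {𝕜 V X : Type*} [NormedField 𝕜] [SeminormedAddCommGroup V] [NormedSpace 𝕜 V]
  [PseudoMetricSpace X] [NormedAddTorsor V X]

theorem dist_pointReflection_left_eq_dist_pointReflection_right (p x y : X) :
    dist (AffineIsometryEquiv.pointReflection 𝕜 p x) y =
      dist x (AffineIsometryEquiv.pointReflection 𝕜 p y) := by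
  rw [← (AffineIsometryEquiv.pointReflection 𝕜 p).dist_map,
    AffineIsometryEquiv.pointReflection_involutive]

end PointReflection

theorem pointReflection_mem_affineSpan_pair {k V X : Type*} [Ring k] [AddCommGroup V] [Module k V]
    [AddTorsor V X] (p q : X) : AffineEquiv.pointReflection k p q ∈ line[k, p, q] := by
  have h : AffineEquiv.pointReflection k p q = AffineMap.lineMap p q (-1 : k) := by
    rw [AffineEquiv.pointReflection_apply, AffineMap.lineMap_apply, neg_one_smul,
      neg_vsub_eq_vsub_rev]
  exact h ▸ AffineMap.lineMap_mem_affineSpan_pair (-1 : k) p q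

section SecondInter

open EuclideanGeometry

variable {V X : Type*} [NormedAddCommGroup V] [InnerProductSpace ℝ V]
  [MetricSpace X] [NormedAddTorsor V X]

theorem secondInter_eq_smul_vadd (s : Sphere X) (p : X) (v : V) :
    s.secondInter p v = (2 * ⟪v, s.center -ᵥ p⟫ / ‖v‖ ^ 2) • v +ᵥ p := by
  rw [Sphere.secondInter, ← neg_vsub_eq_vsub_rev p, inner_neg_right, real_inner_self_eq_norm_sq,
    neg_mul, mul_neg]

theorem pointReflection_eq_secondInter_iff_mem {s : Sphere X} {p : X} (hp : p ∈ s) (q : X) :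
    AffineIsometryEquiv.pointReflection ℝ p q = s.secondInter p (q -ᵥ p) ↔
      AffineIsometryEquiv.pointReflection ℝ p q ∈ s := by
  have hline : AffineIsometryEquiv.pointReflection ℝ p q ∈ line[ℝ, p, q] :=
    pointReflection_mem_affineSpan_pair p q
  rw [← s.eq_or_eq_secondInter_iff_mem_of_mem_affineSpan_pair hp hline]
  refine (or_iff_right_of_imp fun hpq => ?_).symm
  obtain rfl : p = q := (AffineIsometryEquiv.pointReflection ℝ p).injective <| by
    rw [AffineIsometryEquiv.pointReflection_self, hpq]
  rw [vsub_self, Sphere.secondInter_zero, AffineIsometryEquiv.pointReflection_self]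

theorem eq_midpoint_secondInter_iff_pointReflection_mem {s : Sphere X} {p : X} (hp : p ∈ s)
    (q : X) : p = midpoint ℝ (s.secondInter p (q -ᵥ p)) q ↔
      AffineIsometryEquiv.pointReflection ℝ p q ∈ s := by
  rw [eq_comm, midpoint_comm, midpoint_eq_iff]
  exact pointReflection_eq_secondInter_iff_mem hp q

theorem dist_AD_eq_dist_AP_iff_midpoint_general {s : Sphere X} {P : X} (hP : P ∈ s) (D : X) :
    dist (AffineIsometryEquiv.pointReflection ℝ P s.center) D =
        dist (AffineIsometryEquiv.pointReflection ℝ P s.center) P ↔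
      P = midpoint ℝ (s.secondInter P (D -ᵥ P)) D := by
  rw [eq_midpoint_secondInter_iff_pointReflection_mem hP, mem_sphere',
    dist_pointReflection_left_eq_dist_pointReflection_right,
    AffineIsometryEquiv.dist_pointReflection_fixed, mem_sphere'.mp hP]

end SecondInter

theorem dist_AD_eq_dist_AP_iff_midpoint
    (P C D : EuclideanSpace ℝ (Fin 2)) (h : ⟪D - P, C - P⟫ < 0)
    (A B : EuclideanSpace ℝ (Fin 2))
    (hA : A = (2 : ℝ) • P - C)
    (hB : B = P + (2 * ⟪D - P, C - P⟫ / ‖D - P‖ ^ 2) • (D - P)) :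
    dist A D = dist A P ↔ P = midpoint ℝ B D := by
  let s : EuclideanGeometry.Sphere (EuclideanSpace ℝ (Fin 2)) := ⟨C, dist P C⟩
  have hP : P ∈ s := EuclideanGeometry.mem_sphere.mpr rfl
  have hA' : A = AffineIsometryEquiv.pointReflection ℝ P s.center := by
    rw [hA, AffineIsometryEquiv.pointReflection_apply, vsub_eq_sub, vadd_eq_add, two_smul,
      sub_add_eq_add_sub]
  have hB' : B = s.secondInter P (D -ᵥ P) := by
    rw [hB, secondInter_eq_smul_vadd, vadd_eq_add, add_comm, vsub_eq_sub, vsub_eq_sub]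
  rw [hA', hB']
  exact dist_AD_eq_dist_AP_iff_midpoint_general hP D
end

section
/- Let P and C be points of the Euclidean plane with C ≠ P, and let A := 2 • P - C. Then the set of points D satisfying ⟪D - P, C - P⟫ < 0 and P = midpoint(B(D), D), where B(D) := P + (2 * ⟪D - P, C - P⟫ / ‖D - P‖²) • (D - P), is exactly the set of points of the open half-plane {D | ⟪D - P, C - P⟫ < 0} lying on the circle of center A and radius dist(A, P): {D | ⟪D - P, C - P⟫ < 0 ∧ dist(A, D) = dist(A, P)}. -/
open RealInnerProductSpace

/-!
The point `B D` is the second intersection of the line `PD` with the sphere of center `C` through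
`P`. The point reflection of `D` in `P` also lies on this line, so it equals `B D` exactly when it
lies on that sphere, that is, when `D` lies on the mirror image of the sphere in `P`.
-/

section PointReflection

open AffineIsometryEquiv EuclideanGeometry

theorem dist_pointReflection_left_eq_right {𝕜 V X : Type*} [NormedField 𝕜]
    [SeminormedAddCommGroup V] [NormedSpace 𝕜 V] [PseudoMetricSpace X] [NormedAddTorsor V X]
    (p x y : X) : dist (pointReflection 𝕜 p x) y = dist x (pointReflection 𝕜 p y) := by
  rw [← (pointReflection 𝕜 p).dist_map x, pointReflection_involutive]

variable {V : Type*} [NormedAddCommGroup V] [InnerProductSpace ℝ V]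

theorem eq_midpoint_secondInter_iff {X : Type*} [MetricSpace X] [NormedAddTorsor V X]
    {s : Sphere X} {p : X} (hp : p ∈ s) (d : X) :
    p = midpoint ℝ (s.secondInter p (d -ᵥ p)) d ↔ pointReflection ℝ p d ∈ s := by
  have on_line : pointReflection ℝ p d ∈ line[ℝ, p, d] := by
    rw [pointReflection_apply, ← neg_vsub_eq_vsub_rev, ← neg_one_smul ℝ]
    exact smul_vsub_vadd_mem_affineSpan_pair _ _ _
  have eq_secondInter_of_eq (h : pointReflection ℝ p d = p) :
      pointReflection ℝ p d = s.secondInter p (d -ᵥ p) := by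
    obtain rfl : d = p := (pointReflection ℝ p).injective (h.trans (pointReflection_self p).symm)
    rw [h, vsub_self, Sphere.secondInter_zero]
  calc p = midpoint ℝ (s.secondInter p (d -ᵥ p)) d
    _ ↔ pointReflection ℝ p d = s.secondInter p (d -ᵥ p) := by
      rw [eq_comm, midpoint_comm]
      exact midpoint_eq_iff
    _ ↔ pointReflection ℝ p d = p ∨ pointReflection ℝ p d = s.secondInter p (d -ᵥ p) :=
      (or_iff_right_of_imp eq_secondInter_of_eq).symm
    _ ↔ pointReflection ℝ p d ∈ s :=
      Sphere.eq_or_eq_secondInter_iff_mem_of_mem_affineSpan_pair hp on_line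

theorem secondInter_eq_add_smul (s : Sphere V) (p v : V) :
    s.secondInter p v = p + (2 * ⟪v, s.center - p⟫ / ‖v‖ ^ 2) • v := by
  rw [Sphere.secondInter, vsub_eq_sub, vadd_eq_add, add_comm, ← neg_sub s.center p,
    inner_neg_right, neg_mul_neg, real_inner_self_eq_norm_sq]

-- At `D = P` the junk quotient `x / 0` multiplies the zero vector, so `B P = P` whatever its value.
theorem locus_of_D_is_circle_arc_general (P C A : V) (hA : A = (2 : ℝ) • P - C) (B : V → V)
    (hB : ∀ D, B D = P + (2 * ⟪D - P, C - P⟫ / ‖D - P‖ ^ 2) • (D - P)) :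
    {D | P = midpoint ℝ (B D) D} = {D | dist A D = dist A P} := by
  let s : Sphere V := ⟨C, dist P C⟩
  have B_eq_secondInter (D : V) : B D = s.secondInter P (D - P) := by
    rw [hB, secondInter_eq_add_smul]
  have A_eq_pointReflection : A = pointReflection ℝ P C := by
    rw [hA, pointReflection_apply, vsub_eq_sub, vadd_eq_add]
    module
  ext D
  calc P = midpoint ℝ (B D) D
    _ ↔ pointReflection ℝ P D ∈ s := by
      rw [B_eq_secondInter]
      exact eq_midpoint_secondInter_iff rfl D
    _ ↔ dist D A = dist P A := by
      rw [mem_sphere, dist_pointReflection_left_eq_right, A_eq_pointReflection, dist_comm P,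
        dist_pointReflection_fixed, dist_comm C]
    _ ↔ dist A D = dist A P := by rw [dist_comm D, dist_comm P]

end PointReflection

theorem locus_of_D_is_circle_arc
    (P C : EuclideanSpace ℝ (Fin 2)) (hC : C ≠ P)
    (A : EuclideanSpace ℝ (Fin 2)) (hA : A = (2 : ℝ) • P - C)
    (B : EuclideanSpace ℝ (Fin 2) → EuclideanSpace ℝ (Fin 2))
    (hB : ∀ D, B D = P + (2 * ⟪D - P, C - P⟫ / ‖D - P‖ ^ 2) • (D - P)) :
    {D : EuclideanSpace ℝ (Fin 2) | ⟪D - P, C - P⟫ < 0 ∧ P = midpoint ℝ (B D) D} =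
    {D : EuclideanSpace ℝ (Fin 2) | ⟪D - P, C - P⟫ < 0 ∧ dist A D = dist A P} :=
  congrArg ({D | ⟪D - P, C - P⟫ < 0} ∩ ·) (locus_of_D_is_circle_arc_general P C A hA B hB)
end
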